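/- If a formula φ(x) of the correspondence language is logically equivalent to the (2,2)-standard x-translation of some modal intuitionistic formula, then there exists k ∈ ℕ such that φ(x) is invariant with respect to (2,2)-modal k-asimulations. -/

import Mathlib

namespace ModalIntAsim

/-- Binary relation symbols of the correspondence vocabulary: R, R_□, R_◇. -/
inductive RelSym : Type
  | r | box | diam
deriving DecidableEq

/-- Formulas of the correspondence language: classical first-order logic without
identity, with variables indexed by `ℕ`, unary predicate letters `P n` (n : ℕ),
and the three binary relation symbols. -/
inductive FOForm : Type
  | falsum : FOForm
  | pred : ℕ → ℕ → FOForm            -- `pred n v` is `P_n(x_v)`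
  | rel : RelSym → ℕ → ℕ → FOForm    -- `rel s v w` is `S(x_v, x_w)`
  | conj : FOForm → FOForm → FOForm
  | disj : FOForm → FOForm → FOForm
  | impl : FOForm → FOForm → FOForm
  | all : ℕ → FOForm → FOForm
  | ex : ℕ → FOForm → FOForm

namespace FOForm

/-- Free variables of a correspondence formula. -/
def freeVars : FOForm → Finset ℕ
  | falsum => ∅
  | pred _ v => {v}
  | rel _ v w => {v, w}
  | conj f g => f.freeVars ∪ g.freeVars
  | disj f g => f.freeVars ∪ g.freeVars
  | impl f g => f.freeVars ∪ g.freeVars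
  | all v f => f.freeVars \ {v}
  | ex v f => f.freeVars \ {v}

/-- The unary predicate letters occurring in a formula (the binary relation
symbols R, R_□, R_◇ are regarded as belonging to every vocabulary Σ_φ). -/
def predLetters : FOForm → Finset ℕ
  | falsum => ∅
  | pred n _ => {n}
  | rel _ _ _ => ∅
  | conj f g => f.predLetters ∪ g.predLetters
  | disj f g => f.predLetters ∪ g.predLetters
  | impl f g => f.predLetters ∪ g.predLetters
  | all _ f => f.predLetters
  | ex _ f => f.predLetters

/-- Degree of a formula: the greatest number of nested quantifiers. -/
def degree : FOForm → ℕ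
  | falsum => 0
  | pred _ _ => 0
  | rel _ _ _ => 0
  | conj f g => max f.degree g.degree
  | disj f g => max f.degree g.degree
  | impl f g => max f.degree g.degree
  | all _ f => f.degree + 1
  | ex _ f => f.degree + 1

end FOForm

/-- A model of the correspondence language: a domain together with
interpretations of R, R_□, R_◇ and of the unary predicate letters.
(A Θ-model only consults the letters in Θ.) -/
structure Model : Type 1 where
  U : Type
  rel : U → U → Prop
  relBox : U → U → Prop
  relDiam : U → U → Prop
  pred : ℕ → U → Prop

/-- Interpretation of a binary relation symbol in a model. -/
def Model.relOf (M : Model) : RelSym → M.U → M.U → Prop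
  | .r => M.rel
  | .box => M.relBox
  | .diam => M.relDiam

/-- Tarskian satisfaction of a formula in a model under an assignment. -/
def Sat (M : Model) : FOForm → (ℕ → M.U) → Prop
  | .falsum, _ => False
  | .pred n v, α => M.pred n (α v)
  | .rel s v w, α => M.relOf s (α v) (α w)
  | .conj f g, α => Sat M f α ∧ Sat M g α
  | .disj f g, α => Sat M f α ∨ Sat M g α
  | .impl f g, α => Sat M f α → Sat M g α
  | .all v f, α => ∀ u : M.U, Sat M f (Function.update α v u)
  | .ex v f, α => ∃ u : M.U, Sat M f (Function.update α v u)

/-- `M, a ⊨ φ(x)`: φ is true in `M` under any assignment sending `x` to `a`. -/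
def SatAt (M : Model) (a : M.U) (x : ℕ) (φ : FOForm) : Prop :=
  ∀ α : ℕ → M.U, α x = a → Sat M φ α

/-- Logical equivalence of correspondence formulas. -/
def Equiv (φ ψ : FOForm) : Prop :=
  ∀ (M : Model) (α : ℕ → M.U), Sat M φ α ↔ Sat M ψ α

/-- Logical entailment between correspondence formulas. -/
def Entails (φ ψ : FOForm) : Prop :=
  ∀ (M : Model) (α : ℕ → M.U), Sat M φ α → Sat M ψ α

/-- Modal intuitionistic formulas: built from propositional letters `p n`
using ⊥, ∧, ∨, →, □, ◇. -/
inductive MForm : Type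
  | bot : MForm
  | prop : ℕ → MForm
  | conj : MForm → MForm → MForm
  | disj : MForm → MForm → MForm
  | impl : MForm → MForm → MForm
  | box : MForm → MForm
  | diam : MForm → MForm

/-- The (i,j)-standard x-translation `ST_ij`.  `boxOne = true` means the box
clause (□₁) is used (i = 1), `boxOne = false` means (□₂) (i = 2); likewise
`diamOne = true` means the diamond clause (◇₁) (j = 1) and `diamOne = false`
means (◇₂) (j = 2).  Bound variables are chosen fresh as `x+1`, `x+2`. -/
def ST (boxOne diamOne : Bool) : MForm → ℕ → FOForm
  | .bot, _ => .falsum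
  | .prop n, x => .pred n x
  | .conj I J, x => .conj (ST boxOne diamOne I x) (ST boxOne diamOne J x)
  | .disj I J, x => .disj (ST boxOne diamOne I x) (ST boxOne diamOne J x)
  | .impl I J, x =>
      .all (x + 1) (.impl (.rel .r x (x + 1))
        (.impl (ST boxOne diamOne I (x + 1)) (ST boxOne diamOne J (x + 1))))
  | .box I, x =>
      if boxOne then
        .all (x + 1) (.impl (.rel .box x (x + 1)) (ST boxOne diamOne I (x + 1)))
      else
        .all (x + 1) (.impl (.rel .r x (x + 1))
          (.all (x + 2) (.impl (.rel .box (x + 1) (x + 2)) (ST boxOne diamOne I (x + 2)))))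
  | .diam I, x =>
      if diamOne then
        .ex (x + 1) (.conj (.rel .diam x (x + 1)) (ST boxOne diamOne I (x + 1)))
      else
        .all (x + 1) (.impl (.rel .r x (x + 1))
          (.ex (x + 2) (.conj (.rel .diam (x + 1) (x + 2)) (ST boxOne diamOne I (x + 2)))))

/-! ### Conditions on relations between tuples (the k-asimulation conditions).
A relation between the two models is represented by its two directed
components; `N` is the model of the source tuple and `P` that of the target
tuple.  A tuple `(ā_m, a)` is represented as the list `as ++ [a]`, with
`m = as.length`. -/

section TupleConds

variable (N P : Model)

/-- The "p-type" condition: related tuples are nonempty and of equal length. -/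
def TypeCond (A : List N.U → List P.U → Prop) : Prop :=
  ∀ as bs, A as bs → as ≠ [] ∧ as.length = bs.length

/-- (p-base). -/
def BaseCond (Θ : Set ℕ) (A : List N.U → List P.U → Prop) : Prop :=
  ∀ (as : List N.U) (bs : List P.U) (a : N.U) (b : P.U),
    A (as ++ [a]) (bs ++ [b]) → ∀ n ∈ Θ, N.pred n a → P.pred n b

/-- (p-step). -/
def StepCond (k : ℕ) (A : List N.U → List P.U → Prop)
    (Arev : List P.U → List N.U → Prop) : Prop :=
  ∀ (as : List N.U) (bs : List P.U) (a : N.U) (b d : P.U),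
    A (as ++ [a]) (bs ++ [b]) → P.rel b d → as.length < k →
    ∃ c : N.U, N.rel a c ∧ A (as ++ [a, c]) (bs ++ [b, d]) ∧
      Arev (bs ++ [b, d]) (as ++ [a, c])

/-- (p-box-1). -/
def Box1Cond (k : ℕ) (A : List N.U → List P.U → Prop) : Prop :=
  ∀ (as : List N.U) (bs : List P.U) (a : N.U) (b d : P.U),
    A (as ++ [a]) (bs ++ [b]) → P.relBox b d → as.length < k →
    ∃ c : N.U, N.relBox a c ∧ A (as ++ [a, c]) (bs ++ [b, d])

/-- (p-box-2). -/
def Box2Cond (k : ℕ) (A : List N.U → List P.U → Prop) : Prop :=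
  ∀ (as : List N.U) (bs : List P.U) (a : N.U) (b d f : P.U),
    A (as ++ [a]) (bs ++ [b]) → P.rel b d → P.relBox d f → as.length + 1 < k →
    ∃ c e : N.U, N.rel a c ∧ N.relBox c e ∧ A (as ++ [a, c, e]) (bs ++ [b, d, f])

/-- (p-diam-1). -/
def Diam1Cond (k : ℕ) (A : List N.U → List P.U → Prop) : Prop :=
  ∀ (as : List N.U) (bs : List P.U) (a c : N.U) (b : P.U),
    A (as ++ [a]) (bs ++ [b]) → N.relDiam a c → as.length < k →
    ∃ d : P.U, P.relDiam b d ∧ A (as ++ [a, c]) (bs ++ [b, d])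

/-- (p-diam-2(1)). -/
def Diam2aCond (k : ℕ) (A B : List N.U → List P.U → Prop) : Prop :=
  ∀ (as : List N.U) (bs : List P.U) (a : N.U) (b d : P.U),
    A (as ++ [a]) (bs ++ [b]) → P.rel b d → as.length + 1 < k →
    ∃ c : N.U, N.rel a c ∧ B (as ++ [a, c]) (bs ++ [b, d])

/-- (p-diam-2(2)). -/
def Diam2bCond (k : ℕ) (B A : List N.U → List P.U → Prop) : Prop :=
  ∀ (as : List N.U) (bs : List P.U) (a c : N.U) (b : P.U),
    B (as ++ [a]) (bs ++ [b]) → N.relDiam a c → as.length < k →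
    ∃ d : P.U, P.relDiam b d ∧ A (as ++ [a, c]) (bs ++ [b, d])

end TupleConds

/-- An (i,1)-modal ⟨(M₁,t),(M₂,u)⟩_k-asimulation (j = 1): a single relation `A`
given by its two directed components `A12`, `A21`. -/
def IsKAsimD1 (boxOne : Bool) (Θ : Set ℕ) (M₁ M₂ : Model) (t : M₁.U) (u : M₂.U) (k : ℕ)
    (A12 : List M₁.U → List M₂.U → Prop) (A21 : List M₂.U → List M₁.U → Prop) : Prop :=
  TypeCond M₁ M₂ A12 ∧ TypeCond M₂ M₁ A21 ∧
  A12 [t] [u] ∧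
  BaseCond M₁ M₂ Θ A12 ∧ BaseCond M₂ M₁ Θ A21 ∧
  StepCond M₁ M₂ k A12 A21 ∧ StepCond M₂ M₁ k A21 A12 ∧
  (if boxOne then Box1Cond M₁ M₂ k A12 ∧ Box1Cond M₂ M₁ k A21
   else Box2Cond M₁ M₂ k A12 ∧ Box2Cond M₂ M₁ k A21) ∧
  Diam1Cond M₁ M₂ k A12 ∧ Diam1Cond M₂ M₁ k A21

/-- An (i,2)-modal ⟨(M₁,t),(M₂,u)⟩_k-asimulation (j = 2): an ordered pair
(A, B) of relations, each given by its two directed components. -/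
def IsKAsimD2 (boxOne : Bool) (Θ : Set ℕ) (M₁ M₂ : Model) (t : M₁.U) (u : M₂.U) (k : ℕ)
    (A12 : List M₁.U → List M₂.U → Prop) (A21 : List M₂.U → List M₁.U → Prop)
    (B12 : List M₁.U → List M₂.U → Prop) (B21 : List M₂.U → List M₁.U → Prop) : Prop :=
  TypeCond M₁ M₂ A12 ∧ TypeCond M₂ M₁ A21 ∧
  TypeCond M₁ M₂ B12 ∧ TypeCond M₂ M₁ B21 ∧
  A12 [t] [u] ∧
  BaseCond M₁ M₂ Θ A12 ∧ BaseCond M₂ M₁ Θ A21 ∧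
  StepCond M₁ M₂ k A12 A21 ∧ StepCond M₂ M₁ k A21 A12 ∧
  (if boxOne then Box1Cond M₁ M₂ k A12 ∧ Box1Cond M₂ M₁ k A21
   else Box2Cond M₁ M₂ k A12 ∧ Box2Cond M₂ M₁ k A21) ∧
  Diam2aCond M₁ M₂ k A12 B12 ∧ Diam2aCond M₂ M₁ k A21 B21 ∧
  Diam2bCond M₁ M₂ k B12 A12 ∧ Diam2bCond M₂ M₁ k B21 A21

/-- φ(x) is invariant with respect to (i,1)-modal k-asimulations. -/
def KInvariantD1 (boxOne : Bool) (x : ℕ) (φ : FOForm) (k : ℕ) : Prop :=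
  ∀ Θ : Set ℕ, (φ.predLetters : Set ℕ) ⊆ Θ →
  ∀ (M₁ M₂ : Model) (t : M₁.U) (u : M₂.U)
    (A12 : List M₁.U → List M₂.U → Prop) (A21 : List M₂.U → List M₁.U → Prop),
    IsKAsimD1 boxOne Θ M₁ M₂ t u k A12 A21 →
    ∀ (a : M₁.U) (b : M₂.U), A12 [a] [b] → SatAt M₁ a x φ → SatAt M₂ b x φ

/-- φ(x) is invariant with respect to (i,2)-modal k-asimulations. -/
def KInvariantD2 (boxOne : Bool) (x : ℕ) (φ : FOForm) (k : ℕ) : Prop :=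
  ∀ Θ : Set ℕ, (φ.predLetters : Set ℕ) ⊆ Θ →
  ∀ (M₁ M₂ : Model) (t : M₁.U) (u : M₂.U)
    (A12 : List M₁.U → List M₂.U → Prop) (A21 : List M₂.U → List M₁.U → Prop)
    (B12 : List M₁.U → List M₂.U → Prop) (B21 : List M₂.U → List M₁.U → Prop),
    IsKAsimD2 boxOne Θ M₁ M₂ t u k A12 A21 B12 B21 →
    ∀ (a : M₁.U) (b : M₂.U), A12 [a] [b] → SatAt M₁ a x φ → SatAt M₂ b x φ

/-! ### Conditions for asimulations *simpliciter* (relations between elements). -/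

section ElemConds

variable (N P : Model)

/-- (base). -/
def BaseCondE (Θ : Set ℕ) (A : N.U → P.U → Prop) : Prop :=
  ∀ (a : N.U) (b : P.U), A a b → ∀ n ∈ Θ, N.pred n a → P.pred n b

/-- (step). -/
def StepCondE (A : N.U → P.U → Prop) (Arev : P.U → N.U → Prop) : Prop :=
  ∀ (a : N.U) (b d : P.U), A a b → P.rel b d →
    ∃ c : N.U, N.rel a c ∧ A c d ∧ Arev d c

/-- (box-1). -/
def Box1CondE (A : N.U → P.U → Prop) : Prop :=
  ∀ (a : N.U) (b d : P.U), A a b → P.relBox b d →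
    ∃ c : N.U, N.relBox a c ∧ A c d

/-- (box-2). -/
def Box2CondE (A : N.U → P.U → Prop) : Prop :=
  ∀ (a : N.U) (b d f : P.U), A a b → P.rel b d → P.relBox d f →
    ∃ c e : N.U, N.rel a c ∧ N.relBox c e ∧ A e f

/-- (diam-1). -/
def Diam1CondE (A : N.U → P.U → Prop) : Prop :=
  ∀ (a c : N.U) (b : P.U), A a b → N.relDiam a c →
    ∃ d : P.U, P.relDiam b d ∧ A c d

/-- (diam-2(1)). -/
def Diam2aCondE (A B : N.U → P.U → Prop) : Prop :=
  ∀ (a : N.U) (b d : P.U), A a b → P.rel b d →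
    ∃ c : N.U, N.rel a c ∧ B c d

/-- (diam-2(2)). -/
def Diam2bCondE (B A : N.U → P.U → Prop) : Prop :=
  ∀ (a c : N.U) (b : P.U), B a b → N.relDiam a c →
    ∃ d : P.U, P.relDiam b d ∧ A c d

end ElemConds

/-- An (i,1)-modal ⟨(M₁,t),(M₂,u)⟩-asimulation (j = 1). -/
def IsAsimD1 (boxOne : Bool) (Θ : Set ℕ) (M₁ M₂ : Model) (t : M₁.U) (u : M₂.U)
    (A12 : M₁.U → M₂.U → Prop) (A21 : M₂.U → M₁.U → Prop) : Prop :=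
  A12 t u ∧
  BaseCondE M₁ M₂ Θ A12 ∧ BaseCondE M₂ M₁ Θ A21 ∧
  StepCondE M₁ M₂ A12 A21 ∧ StepCondE M₂ M₁ A21 A12 ∧
  (if boxOne then Box1CondE M₁ M₂ A12 ∧ Box1CondE M₂ M₁ A21
   else Box2CondE M₁ M₂ A12 ∧ Box2CondE M₂ M₁ A21) ∧
  Diam1CondE M₁ M₂ A12 ∧ Diam1CondE M₂ M₁ A21

/-- An (i,2)-modal ⟨(M₁,t),(M₂,u)⟩-asimulation (j = 2). -/
def IsAsimD2 (boxOne : Bool) (Θ : Set ℕ) (M₁ M₂ : Model) (t : M₁.U) (u : M₂.U)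
    (A12 : M₁.U → M₂.U → Prop) (A21 : M₂.U → M₁.U → Prop)
    (B12 : M₁.U → M₂.U → Prop) (B21 : M₂.U → M₁.U → Prop) : Prop :=
  A12 t u ∧
  BaseCondE M₁ M₂ Θ A12 ∧ BaseCondE M₂ M₁ Θ A21 ∧
  StepCondE M₁ M₂ A12 A21 ∧ StepCondE M₂ M₁ A21 A12 ∧
  (if boxOne then Box1CondE M₁ M₂ A12 ∧ Box1CondE M₂ M₁ A21
   else Box2CondE M₁ M₂ A12 ∧ Box2CondE M₂ M₁ A21) ∧
  Diam2aCondE M₁ M₂ A12 B12 ∧ Diam2aCondE M₂ M₁ A21 B21 ∧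
  Diam2bCondE M₁ M₂ B12 A12 ∧ Diam2bCondE M₂ M₁ B21 A21

/-- φ(x) is invariant with respect to (i,1)-modal asimulations. -/
def InvariantD1 (boxOne : Bool) (x : ℕ) (φ : FOForm) : Prop :=
  ∀ Θ : Set ℕ, (φ.predLetters : Set ℕ) ⊆ Θ →
  ∀ (M₁ M₂ : Model) (t : M₁.U) (u : M₂.U)
    (A12 : M₁.U → M₂.U → Prop) (A21 : M₂.U → M₁.U → Prop),
    IsAsimD1 boxOne Θ M₁ M₂ t u A12 A21 →
    ∀ (a : M₁.U) (b : M₂.U), A12 a b → SatAt M₁ a x φ → SatAt M₂ b x φ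

/-- φ(x) is invariant with respect to (i,2)-modal asimulations. -/
def InvariantD2 (boxOne : Bool) (x : ℕ) (φ : FOForm) : Prop :=
  ∀ Θ : Set ℕ, (φ.predLetters : Set ℕ) ⊆ Θ →
  ∀ (M₁ M₂ : Model) (t : M₁.U) (u : M₂.U)
    (A12 : M₁.U → M₂.U → Prop) (A21 : M₂.U → M₁.U → Prop)
    (B12 : M₁.U → M₂.U → Prop) (B21 : M₂.U → M₁.U → Prop),
    IsAsimD2 boxOne Θ M₁ M₂ t u A12 A21 B12 B21 →
    ∀ (a : M₁.U) (b : M₂.U), A12 a b → SatAt M₁ a x φ → SatAt M₂ b x φ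

/-! ### Types, complete conjunctions, ω-saturation. -/

/-- `int(φ,x,l)`: the set of (2,2)-standard x-translations of modal
intuitionistic formulas which are (Σ_φ,x,l)-formulas. -/
def intSet (φ : FOForm) (x l : ℕ) : Set FOForm :=
  {ψ | (∃ I : MForm, ψ = ST false false I x) ∧
    ψ.predLetters ⊆ φ.predLetters ∧ ψ.freeVars ⊆ {x} ∧ ψ.degree ≤ l}

/-- `tp_l(φ(x),M,a)`. -/
def tpSet (φ : FOForm) (x l : ℕ) (M : Model) (a : M.U) : Set FOForm :=
  {ψ | ψ ∈ intSet φ x l ∧ SatAt M a x ψ}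

/-- Conjunction of a nonempty list of formulas. -/
def listConj : FOForm → List FOForm → FOForm
  | ψ, [] => ψ
  | ψ, χ :: L => FOForm.conj ψ (listConj χ L)

/-- Ψ(x) is a complete (φ,x,k)-conjunction. -/
def IsCompleteConj (φ : FOForm) (x k : ℕ) (Ψ : FOForm) : Prop :=
  (∃ (ψ₀ : FOForm) (L : List FOForm), ψ₀ ∈ intSet φ x k ∧
    (∀ χ ∈ L, χ ∈ intSet φ x k) ∧ Ψ = listConj ψ₀ L) ∧
  ∃ (M : Model) (a : M.U), SatAt M a x (FOForm.conj Ψ φ) ∧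
    ∀ ψ ∈ tpSet φ x k M a, Entails Ψ ψ

/-- `int_x(Θ)` for the (i,j)-standard translation. -/
def intX (Θ : Set ℕ) (boxOne diamOne : Bool) (x : ℕ) : Set FOForm :=
  {ψ | (∃ I : MForm, ψ = ST boxOne diamOne I x) ∧ (ψ.predLetters : Set ℕ) ⊆ Θ}

/-- `tp_x(M,t)` for the (i,j)-standard translation. -/
def tpX (Θ : Set ℕ) (boxOne diamOne : Bool) (x : ℕ) (M : Model) (t : M.U) : Set FOForm :=
  {ψ | ψ ∈ intX Θ boxOne diamOne x ∧ SatAt M t x ψ}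

/-- `imp_x(M,t) = ⋂ { t̄p_x(M,u) : t R_◇ u }` (for the (2,2)-translation). -/
def impX (Θ : Set ℕ) (x : ℕ) (M : Model) (t : M.U) : Set FOForm :=
  {ψ | ψ ∈ intX Θ false false x ∧ ∀ u : M.U, M.relDiam t u → ¬ SatAt M u x ψ}

/-- ω-saturation: for every finite tuple of parameters (the first `n` values of
an assignment `α`) and every set `Γ` of formulas with finitely many free
variables beyond the parameters, if `Γ` is consistent with the first-order
theory of `[M,ā]` (i.e. satisfiable together with it in some model), then `Γ`
is realized in `[M,ā]`. -/
def OmegaSaturated (M : Model) : Prop :=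
  ∀ (n : ℕ) (α : ℕ → M.U) (Γ : Set FOForm),
    (∃ k : ℕ, ∀ γ ∈ Γ, γ.freeVars ⊆ Finset.range (n + k)) →
    (∃ (N : Model) (β : ℕ → N.U),
      (∀ ψ : FOForm, ψ.freeVars ⊆ Finset.range n → Sat M ψ α → Sat N ψ β) ∧
      ∀ γ ∈ Γ, Sat N γ β) →
    ∃ α' : ℕ → M.U, (∀ i < n, α' i = α i) ∧ ∀ γ ∈ Γ, Sat M γ α'

/-! ### Relativization to a class κ of models. -/

/-- κ(Θ) is first-order axiomatizable for every finite Θ (with R ∈ Θ): for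
every finite set `S` of unary predicate letters there is a set of Θ-sentences
axiomatizing membership in κ. -/
def FinAxiomatizable (κ : Set Model) : Prop :=
  ∀ S : Finset ℕ, ∃ Ax : Set FOForm,
    (∀ ψ ∈ Ax, ψ.freeVars = ∅ ∧ (ψ.predLetters : Set ℕ) ⊆ (S : Set ℕ)) ∧
    ∀ M : Model, M ∈ κ ↔ ∀ ψ ∈ Ax, ∀ α : ℕ → M.U, Sat M ψ α

/-- φ κ-follows from ψ: {ψ, ¬φ} is not κ-satisfiable. -/
def KappaFollows (κ : Set Model) (ψ φ : FOForm) : Prop :=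
  ¬ ∃ M : Model, M ∈ κ ∧ ∃ α : ℕ → M.U, Sat M ψ α ∧ ¬ Sat M φ α

/-- κ-equivalence of formulas. -/
def KappaEquiv (κ : Set Model) (φ ψ : FOForm) : Prop :=
  KappaFollows κ φ ψ ∧ KappaFollows κ ψ φ

/-- φ(x) is κ-invariant with respect to (i,1)-modal asimulations. -/
def KappaInvariantD1 (κ : Set Model) (boxOne : Bool) (x : ℕ) (φ : FOForm) : Prop :=
  ∀ Θ : Set ℕ, (φ.predLetters : Set ℕ) ⊆ Θ →
  ∀ (M₁ M₂ : Model), M₁ ∈ κ → M₂ ∈ κ →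
  ∀ (t : M₁.U) (u : M₂.U)
    (A12 : M₁.U → M₂.U → Prop) (A21 : M₂.U → M₁.U → Prop),
    IsAsimD1 boxOne Θ M₁ M₂ t u A12 A21 →
    ∀ (a : M₁.U) (b : M₂.U), A12 a b → SatAt M₁ a x φ → SatAt M₂ b x φ

/-- φ(x) is κ-invariant with respect to (i,2)-modal asimulations. -/
def KappaInvariantD2 (κ : Set Model) (boxOne : Bool) (x : ℕ) (φ : FOForm) : Prop :=
  ∀ Θ : Set ℕ, (φ.predLetters : Set ℕ) ⊆ Θ →
  ∀ (M₁ M₂ : Model), M₁ ∈ κ → M₂ ∈ κ →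
  ∀ (t : M₁.U) (u : M₂.U)
    (A12 : M₁.U → M₂.U → Prop) (A21 : M₂.U → M₁.U → Prop)
    (B12 : M₁.U → M₂.U → Prop) (B21 : M₂.U → M₁.U → Prop),
    IsAsimD2 boxOne Θ M₁ M₂ t u A12 A21 B12 B21 →
    ∀ (a : M₁.U) (b : M₂.U), A12 a b → SatAt M₁ a x φ → SatAt M₂ b x φ

/-- φ(x) is κ-invariant with respect to (i,j)-modal asimulations
(`diamOne = true` means j = 1). -/
def KappaInvariant (κ : Set Model) (boxOne diamOne : Bool) (x : ℕ) (φ : FOForm) : Prop :=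
  if diamOne then KappaInvariantD1 κ boxOne x φ else KappaInvariantD2 κ boxOne x φ


/-- Direct semantics of the (2,2)-reading of modal formulas, relative to letters in `S`. -/
def Frc22 (S : Set ℕ) (M : Model) : MForm → M.U → Prop
  | .bot, _ => False
  | .prop n, a => n ∈ S ∧ M.pred n a
  | .conj I J, a => Frc22 S M I a ∧ Frc22 S M J a
  | .disj I J, a => Frc22 S M I a ∨ Frc22 S M J a
  | .impl I J, a => ∀ b, M.rel a b → Frc22 S M I b → Frc22 S M J b
  | .box I, a => ∀ b, M.rel a b → ∀ c, M.relBox b c → Frc22 S M I c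
  | .diam I, a => ∀ b, M.rel a b → ∃ c, M.relDiam b c ∧ Frc22 S M I c

/-- Nesting depth. -/
def mdeg : MForm → ℕ
  | .bot => 0
  | .prop _ => 0
  | .conj I J => max (mdeg I) (mdeg J)
  | .disj I J => max (mdeg I) (mdeg J)
  | .impl I J => max (mdeg I) (mdeg J) + 1
  | .box I => mdeg I + 2
  | .diam I => mdeg I + 2

/-- The model with all letters outside `S` emptied. -/
def restr (S : Set ℕ) (M : Model) : Model :=
  ⟨M.U, M.rel, M.relBox, M.relDiam, fun n a => n ∈ S ∧ M.pred n a⟩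

theorem sat_restr (S : Set ℕ) (M : Model) (φ : FOForm) :
    (φ.predLetters : Set ℕ) ⊆ S → ∀ α : ℕ → M.U, Sat (restr S M) φ α ↔ Sat M φ α := by
  induction φ with
  | falsum => intro _ α; exact Iff.rfl
  | pred n v =>
    intro h α
    have : n ∈ S := h (by simp [FOForm.predLetters])
    exact ⟨fun h => h.2, fun h => ⟨this, h⟩⟩
  | rel s v w => intro _ α; cases s <;> exact Iff.rfl
  | conj f g ihf ihg =>
    intro h α
    simp only [FOForm.predLetters, Finset.coe_union, Set.union_subset_iff] at h
    exact and_congr (ihf h.1 α) (ihg h.2 α)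
  | disj f g ihf ihg =>
    intro h α
    simp only [FOForm.predLetters, Finset.coe_union, Set.union_subset_iff] at h
    exact or_congr (ihf h.1 α) (ihg h.2 α)
  | impl f g ihf ihg =>
    intro h α
    simp only [FOForm.predLetters, Finset.coe_union, Set.union_subset_iff] at h
    exact imp_congr (ihf h.1 α) (ihg h.2 α)
  | all v f ih => intro h α; exact forall_congr' fun u => ih h _
  | ex v f ih => intro h α; exact exists_congr fun u => ih h _

theorem sat_ST22 (M : Model) (I : MForm) :
    ∀ (x : ℕ) (α : ℕ → M.U), Sat M (ST false false I x) α ↔ Frc22 Set.univ M I (α x) := by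
  induction I with
  | bot => intro x α; exact Iff.rfl
  | prop n => intro x α; simp [ST, Sat, Frc22]
  | conj I J ihI ihJ => intro x α; exact and_congr (ihI x α) (ihJ x α)
  | disj I J ihI ihJ => intro x α; exact or_congr (ihI x α) (ihJ x α)
  | impl I J ihI ihJ =>
    intro x α
    refine forall_congr' fun u => ?_
    refine imp_congr ?_ (imp_congr ?_ ?_)
    · simp [Sat, Model.relOf]
    · refine (ihI _ _).trans ?_; simp
    · refine (ihJ _ _).trans ?_; simp
  | box I ih =>
    intro x α
    refine forall_congr' fun u => ?_
    refine imp_congr ?_ (forall_congr' fun w => imp_congr ?_ ?_)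
    · simp [Sat, Model.relOf]
    · simp [Sat, Model.relOf]
    · refine (ih _ _).trans ?_; simp
  | diam I ih =>
    intro x α
    refine forall_congr' fun u => ?_
    refine imp_congr ?_ (exists_congr fun w => and_congr ?_ ?_)
    · simp [Sat, Model.relOf]
    · simp [Sat, Model.relOf]
    · refine (ih _ _).trans ?_; simp

theorem frc22_restr (S : Set ℕ) (M : Model) (I : MForm) :
    ∀ a : M.U, Frc22 Set.univ (restr S M) I a ↔ Frc22 S M I a := by
  induction I with
  | bot => intro a; exact Iff.rfl
  | prop n => intro a; exact ⟨fun h => h.2, fun h => ⟨trivial, h⟩⟩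
  | conj I J ihI ihJ => intro a; exact and_congr (ihI a) (ihJ a)
  | disj I J ihI ihJ => intro a; exact or_congr (ihI a) (ihJ a)
  | impl I J ihI ihJ =>
    intro a
    exact forall_congr' fun b => imp_congr Iff.rfl (imp_congr (ihI b) (ihJ b))
  | box I ih =>
    intro a
    exact forall_congr' fun b => imp_congr Iff.rfl
      (forall_congr' fun c => imp_congr Iff.rfl (ih c))
  | diam I ih =>
    intro a
    exact forall_congr' fun b => imp_congr Iff.rfl
      (exists_congr fun c => and_congr Iff.rfl (ih c))

theorem frc22_preserved (S : Set ℕ) (k : ℕ) (I : MForm) :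
    ∀ (N P : Model) (A : List N.U → List P.U → Prop) (Ar : List P.U → List N.U → Prop)
      (B : List N.U → List P.U → Prop) (Br : List P.U → List N.U → Prop),
      BaseCond N P S A → BaseCond P N S Ar →
      StepCond N P k A Ar → StepCond P N k Ar A →
      Box2Cond N P k A → Box2Cond P N k Ar →
      Diam2aCond N P k A B → Diam2aCond P N k Ar Br →
      Diam2bCond N P k B A → Diam2bCond P N k Br Ar →
      ∀ (as : List N.U) (bs : List P.U) (a : N.U) (b : P.U),
        as.length + mdeg I ≤ k → bs.length + mdeg I ≤ k →
        A (as ++ [a]) (bs ++ [b]) → Frc22 S N I a → Frc22 S P I b := by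
  induction I with
  | bot =>
    intro N P A Ar B Br _ _ _ _ _ _ _ _ _ _ as bs a b _ _ _ h
    exact h
  | prop n =>
    intro N P A Ar B Br h1 _ _ _ _ _ _ _ _ _ as bs a b _ _ hA h
    exact ⟨h.1, h1 as bs a b hA n h.1 h.2⟩
  | conj I J ihI ihJ =>
    intro N P A Ar B Br h1 h2 h3 h4 h5 h6 h7 h8 h9 h10 as bs a b ha hb hA h
    simp only [mdeg] at ha hb
    exact ⟨ihI N P A Ar B Br h1 h2 h3 h4 h5 h6 h7 h8 h9 h10 as bs a b (by omega) (by omega) hA h.1,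
      ihJ N P A Ar B Br h1 h2 h3 h4 h5 h6 h7 h8 h9 h10 as bs a b (by omega) (by omega) hA h.2⟩
  | disj I J ihI ihJ =>
    intro N P A Ar B Br h1 h2 h3 h4 h5 h6 h7 h8 h9 h10 as bs a b ha hb hA h
    simp only [mdeg] at ha hb
    exact Or.imp
      (ihI N P A Ar B Br h1 h2 h3 h4 h5 h6 h7 h8 h9 h10 as bs a b (by omega) (by omega) hA)
      (ihJ N P A Ar B Br h1 h2 h3 h4 h5 h6 h7 h8 h9 h10 as bs a b (by omega) (by omega) hA) h
  | impl I J ihI ihJ =>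
    intro N P A Ar B Br h1 h2 h3 h4 h5 h6 h7 h8 h9 h10 as bs a b ha hb hA h d hd hI
    simp only [mdeg] at ha hb
    obtain ⟨c, hc, hA1, hA2⟩ := h3 as bs a b d hA hd (by omega)
    refine ihJ N P A Ar B Br h1 h2 h3 h4 h5 h6 h7 h8 h9 h10 (as ++ [a]) (bs ++ [b]) c d
      (by simp; omega) (by simp; omega) (by simpa using hA1) (h c hc ?_)
    exact ihI P N Ar A Br B h2 h1 h4 h3 h6 h5 h8 h7 h10 h9 (bs ++ [b]) (as ++ [a]) d c
      (by simp; omega) (by simp; omega) (by simpa using hA2) hI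
  | box I ih =>
    intro N P A Ar B Br h1 h2 h3 h4 h5 h6 h7 h8 h9 h10 as bs a b ha hb hA h d hd f hf
    simp only [mdeg] at ha hb
    obtain ⟨c, e, hc, he, hA1⟩ := h5 as bs a b d f hA hd hf (by omega)
    exact ih N P A Ar B Br h1 h2 h3 h4 h5 h6 h7 h8 h9 h10 (as ++ [a, c]) (bs ++ [b, d]) e f
      (by simp; omega) (by simp; omega) (by simpa using hA1) (h c hc e he)
  | diam I ih =>
    intro N P A Ar B Br h1 h2 h3 h4 h5 h6 h7 h8 h9 h10 as bs a b ha hb hA h d hd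
    simp only [mdeg] at ha hb
    obtain ⟨c, hc, hB⟩ := h7 as bs a b d hA hd (by omega)
    obtain ⟨e, he, hI⟩ := h c hc
    obtain ⟨f, hf, hA1⟩ := h9 (as ++ [a]) (bs ++ [b]) c e d (by simpa using hB) he
      (by simp; omega)
    exact ⟨f, hf, ih N P A Ar B Br h1 h2 h3 h4 h5 h6 h7 h8 h9 h10 (as ++ [a, c]) (bs ++ [b, d]) e f
      (by simp; omega) (by simp; omega) (by simpa using hA1) hI⟩

/-- **Corollary (easy direction, case (2,2)).**  If φ(x) is logically
equivalent to a (2,2)-standard x-translation of a modal intuitionistic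
formula, then there is a k ∈ ℕ such that φ(x) is invariant with respect to
(2,2)-modal k-asimulations. -/
theorem statement_9 (x : ℕ) (φ : FOForm) (hfv : φ.freeVars ⊆ {x})
    (h : ∃ I : MForm, Equiv φ (ST false false I x)) :
    ∃ k : ℕ, KInvariantD2 false x φ k := by
  obtain ⟨I, hI⟩ := h
  refine ⟨mdeg I, ?_⟩
  intro Θ hΘ M₁ M₂ t u A12 A21 B12 B21 hA a b hab hφ β hβ
  obtain ⟨-, -, -, -, -, h1, h2, h3, h4, hbox, h7, h8, h9, h10⟩ := hA
  have hbox' : Box2Cond M₁ M₂ (mdeg I) A12 ∧ Box2Cond M₂ M₁ (mdeg I) A21 := by simpa using hbox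
  have key : ∀ (M : Model) (α : ℕ → M.U), Sat M φ α ↔ Frc22 Θ M I (α x) := fun M α =>
    ((sat_restr Θ M φ hΘ α).symm.trans (hI (restr Θ M) α)).trans
      ((sat_ST22 (restr Θ M) I x α).trans (frc22_restr Θ M I (α x)))
  rw [key, hβ]
  have ha := (key M₁ (fun _ => a)).1 (hφ _ rfl)
  exact frc22_preserved Θ (mdeg I) I M₁ M₂ A12 A21 B12 B21 h1 h2 h3 h4 hbox'.1 hbox'.2
    h7 h8 h9 h10 [] [] a b (by simp) (by simp) hab ha
end ModalIntAsim
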